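/- arXiv:1002.3237 — 4 statements merged into one kernel-verified Lean document; each statement's English description precedes it below -/
import Mathlib

section
/- Let u, v, w ∈ ℝ with w ≠ 0. Then the functions x₁(t) = (v/(2w))cos(2wt) + (u/(2w))sin(2wt) − v/(2w), x₂(t) = −(u/(2w))cos(2wt) + (v/(2w))sin(2wt) + u/(2w), x₃(t) = wt + ((u²+v²)/(2w))t − ((u²+v²)/(4w²))sin(2wt) satisfy x₁(0)=x₂(0)=x₃(0)=0, x₁'(0)=u, x₂'(0)=v, x₃'(0)=w, and for all t ∈ ℝ: x₃'(t) + x₂(t)x₁'(t) − x₁(t)x₂'(t) = w, (x₁' + w·x₂)'(t) = −w·x₂'(t), and (x₂' − w·x₁)'(t) = w·x₁'(t). (These are the geodesic equations of the Heisenberg metric for a geodesic through the origin with initial velocity (u,v,w).) -/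
/-- For `w ≠ 0`, the explicit curve
`x₁(t) = (v/2w)cos 2wt + (u/2w)sin 2wt − v/2w`,
`x₂(t) = −(u/2w)cos 2wt + (v/2w)sin 2wt + u/2w`,
`x₃(t) = wt + ((u²+v²)/2w)t − ((u²+v²)/4w²)sin 2wt`
passes through the origin with velocity `(u,v,w)` and satisfies the geodesic
Euler–Lagrange equations of the Heisenberg metric. -/
theorem heis_geodesic_explicit (u v w : ℝ) (hw : w ≠ 0) (x₁ x₂ x₃ : ℝ → ℝ)
    (hx₁ : x₁ = fun t => v / (2 * w) * Real.cos (2 * w * t)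
      + u / (2 * w) * Real.sin (2 * w * t) - v / (2 * w))
    (hx₂ : x₂ = fun t => -(u / (2 * w)) * Real.cos (2 * w * t)
      + v / (2 * w) * Real.sin (2 * w * t) + u / (2 * w))
    (hx₃ : x₃ = fun t => w * t + (u ^ 2 + v ^ 2) / (2 * w) * t
      - (u ^ 2 + v ^ 2) / (4 * w ^ 2) * Real.sin (2 * w * t)) :
    x₁ 0 = 0 ∧ x₂ 0 = 0 ∧ x₃ 0 = 0 ∧
    deriv x₁ 0 = u ∧ deriv x₂ 0 = v ∧ deriv x₃ 0 = w ∧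
    (∀ t : ℝ, deriv x₃ t + x₂ t * deriv x₁ t - x₁ t * deriv x₂ t = w) ∧
    (∀ t : ℝ, deriv (fun t => deriv x₁ t + w * x₂ t) t = -w * deriv x₂ t) ∧
    (∀ t : ℝ, deriv (fun t => deriv x₂ t - w * x₁ t) t = w * deriv x₁ t) := by
  have hs : ∀ t : ℝ, HasDerivAt (fun t => Real.sin (2 * w * t))
      (Real.cos (2 * w * t) * (2 * w)) t := fun t => by
    simpa using ((hasDerivAt_id t).const_mul (2 * w)).sin
  have hc : ∀ t : ℝ, HasDerivAt (fun t => Real.cos (2 * w * t))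
      (-Real.sin (2 * w * t) * (2 * w)) t := fun t => by
    simpa using ((hasDerivAt_id t).const_mul (2 * w)).cos
  have h1 : ∀ t, HasDerivAt x₁ (u * Real.cos (2 * w * t) - v * Real.sin (2 * w * t)) t := by
    intro t
    rw [hx₁]
    refine ((((hc t).const_mul (v / (2 * w))).add
      ((hs t).const_mul (u / (2 * w)))).sub_const (v / (2 * w))).congr_deriv ?_
    field_simp
    ring
  have h2 : ∀ t, HasDerivAt x₂ (u * Real.sin (2 * w * t) + v * Real.cos (2 * w * t)) t := by
    intro t
    rw [hx₂]
    refine ((((hc t).const_mul (-(u / (2 * w)))).add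
      ((hs t).const_mul (v / (2 * w)))).add_const (u / (2 * w))).congr_deriv ?_
    field_simp
  have h3 : ∀ t, HasDerivAt x₃ (w + (u ^ 2 + v ^ 2) / (2 * w)
      - (u ^ 2 + v ^ 2) / (2 * w) * Real.cos (2 * w * t)) t := by
    intro t
    rw [hx₃]
    refine ((((hasDerivAt_id t).const_mul w).add
      ((hasDerivAt_id t).const_mul ((u ^ 2 + v ^ 2) / (2 * w)))).sub
      ((hs t).const_mul ((u ^ 2 + v ^ 2) / (4 * w ^ 2)))).congr_deriv ?_
    field_simp
    ring
  have d1 : deriv x₁ = fun t => u * Real.cos (2 * w * t) - v * Real.sin (2 * w * t) :=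
    funext fun t => (h1 t).deriv
  have d2 : deriv x₂ = fun t => u * Real.sin (2 * w * t) + v * Real.cos (2 * w * t) :=
    funext fun t => (h2 t).deriv
  have d3 := fun t => (h3 t).deriv
  refine ⟨by simp [hx₁], by simp [hx₂], by simp [hx₃], by simp [d1], by simp [d2],
    by simp [d3], fun t => ?_, fun t => ?_, fun t => ?_⟩
  · rw [d3, d1, d2, hx₁, hx₂]
    beta_reduce
    have h := Real.sin_sq_add_cos_sq (2 * w * t)
    generalize Real.sin (2 * w * t) = s at *
    generalize Real.cos (2 * w * t) = c at *
    field_simp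
    linear_combination (-(u ^ 2 + v ^ 2)) * h
  · rw [d1, d2]
    refine (((((hc t).const_mul u).sub ((hs t).const_mul v)).add
      ((h2 t).const_mul w)).congr_deriv ?_).deriv
    ring
  · rw [d1, d2]
    refine (((((hs t).const_mul u).add ((hc t).const_mul v)).sub
      ((h1 t).const_mul w)).congr_deriv ?_).deriv
    ring
end

section
/- Let u, v, w ∈ ℝ with w ≠ 0, and let x₁, x₂, x₃ : ℝ → ℝ be twice differentiable with x₁(0)=x₂(0)=x₃(0)=0, x₁'(0)=u, x₂'(0)=v, satisfying for all t ∈ ℝ: x₃'(t) + x₂(t)x₁'(t) − x₁(t)x₂'(t) = w, (x₁' + w·x₂)'(t) = −w·x₂'(t), and (x₂' − w·x₁)'(t) = w·x₁'(t). Then for all t ∈ ℝ: x₁(t) = (v/(2w))cos(2wt) + (u/(2w))sin(2wt) − v/(2w), x₂(t) = −(u/(2w))cos(2wt) + (v/(2w))sin(2wt) + u/(2w), and x₃(t) = wt + ((u²+v²)/(2w))t − ((u²+v²)/(4w²))sin(2wt). -/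
theorem heis_const_aux (f : ℝ → ℝ) (h : ∀ t, HasDerivAt f 0 t) (t : ℝ) : f t = f 0 :=
  is_const_of_deriv_eq_zero (fun t => (h t).differentiableAt) (fun t => (h t).deriv) t 0


/-- Uniqueness of the Heisenberg geodesics through the origin with initial velocity
`(u,v,w)`, `w ≠ 0`: any twice differentiable solution of the geodesic Euler–Lagrange
equations of the Heisenberg metric with these initial data is given by the explicit
trigonometric formulas. -/
theorem heis_geodesic_unique (u v w : ℝ) (hw : w ≠ 0) (x₁ x₂ x₃ : ℝ → ℝ)
    (hx₁ : Differentiable ℝ x₁) (hx₁' : Differentiable ℝ (deriv x₁))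
    (hx₂ : Differentiable ℝ x₂) (hx₂' : Differentiable ℝ (deriv x₂))
    (hx₃ : Differentiable ℝ x₃) (hx₃' : Differentiable ℝ (deriv x₃))
    (h0₁ : x₁ 0 = 0) (h0₂ : x₂ 0 = 0) (h0₃ : x₃ 0 = 0)
    (hu : deriv x₁ 0 = u) (hv : deriv x₂ 0 = v)
    (hEL₁ : ∀ t : ℝ, deriv x₃ t + x₂ t * deriv x₁ t - x₁ t * deriv x₂ t = w)
    (hEL₂ : ∀ t : ℝ, deriv (fun t => deriv x₁ t + w * x₂ t) t = -w * deriv x₂ t)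
    (hEL₃ : ∀ t : ℝ, deriv (fun t => deriv x₂ t - w * x₁ t) t = w * deriv x₁ t) :
    ∀ t : ℝ,
      x₁ t = v / (2 * w) * Real.cos (2 * w * t)
        + u / (2 * w) * Real.sin (2 * w * t) - v / (2 * w) ∧
      x₂ t = -(u / (2 * w)) * Real.cos (2 * w * t)
        + v / (2 * w) * Real.sin (2 * w * t) + u / (2 * w) ∧
      x₃ t = w * t + (u ^ 2 + v ^ 2) / (2 * w) * t
        - (u ^ 2 + v ^ 2) / (4 * w ^ 2) * Real.sin (2 * w * t) := by
  have d1 : ∀ t, HasDerivAt x₁ (deriv x₁ t) t := fun t => (hx₁ t).hasDerivAt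
  have d2 : ∀ t, HasDerivAt x₂ (deriv x₂ t) t := fun t => (hx₂ t).hasDerivAt
  have d3 : ∀ t, HasDerivAt x₃ (deriv x₃ t) t := fun t => (hx₃ t).hasDerivAt
  have e1 : ∀ t, deriv x₁ t = u - 2 * w * x₂ t := by
    intro t
    have := heis_const_aux (fun t => (deriv x₁ t + w * x₂ t) + w * x₂ t) (fun t => by
      have h := (((hx₁' t).add ((hx₂ t).const_mul w)).hasDerivAt).add ((d2 t).const_mul w)
      have h2 := hEL₂ t
      refine h.congr_deriv ?_
      change deriv (fun t => deriv x₁ t + w * x₂ t) t + _ = _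
      rw [h2]; ring) t
    simp only [h0₂, hu] at this
    linarith
  have e2 : ∀ t, deriv x₂ t = v + 2 * w * x₁ t := by
    intro t
    have := heis_const_aux (fun t => (deriv x₂ t - w * x₁ t) - w * x₁ t) (fun t => by
      have h := (((hx₂' t).sub ((hx₁ t).const_mul w)).hasDerivAt).sub ((d1 t).const_mul w)
      have h2 := hEL₃ t
      refine h.congr_deriv ?_
      change deriv (fun t => deriv x₂ t - w * x₁ t) t - _ = _
      rw [h2]; ring) t
    simp only [h0₁, hv] at this
    linarith
  have dl : ∀ t : ℝ, HasDerivAt (fun t : ℝ => 2 * w * t) (2 * w) t := fun t => by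
    simpa using (hasDerivAt_id t).const_mul (2 * w)
  have dA : ∀ t, HasDerivAt (fun t => 2 * w * x₁ t + v) (2 * w * (u - 2 * w * x₂ t)) t :=
    fun t => by
      have := ((d1 t).const_mul (2 * w)).add_const v
      rwa [e1] at this
  have dB : ∀ t, HasDerivAt (fun t => 2 * w * x₂ t - u) (2 * w * (v + 2 * w * x₁ t)) t :=
    fun t => by
      have := ((d2 t).const_mul (2 * w)).sub_const u
      rwa [e2] at this
  have k1 : ∀ t, (2 * w * x₁ t + v) * Real.cos (2 * w * t)
      + (2 * w * x₂ t - u) * Real.sin (2 * w * t) = v := by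
    intro t
    have := heis_const_aux (fun t => (2 * w * x₁ t + v) * Real.cos (2 * w * t)
      + (2 * w * x₂ t - u) * Real.sin (2 * w * t)) (fun t =>
      (((dA t).mul (dl t).cos).add ((dB t).mul (dl t).sin)).congr_deriv (by ring)) t
    simpa [h0₁, h0₂] using this
  have k2 : ∀ t, (2 * w * x₂ t - u) * Real.cos (2 * w * t)
      - (2 * w * x₁ t + v) * Real.sin (2 * w * t) = -u := by
    intro t
    have := heis_const_aux (fun t => (2 * w * x₂ t - u) * Real.cos (2 * w * t)
      - (2 * w * x₁ t + v) * Real.sin (2 * w * t)) (fun t =>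
      (((dB t).mul (dl t).cos).sub ((dA t).mul (dl t).sin)).congr_deriv (by ring)) t
    simpa [h0₁, h0₂] using this
  have f1 : ∀ t, x₁ t = v / (2 * w) * Real.cos (2 * w * t)
        + u / (2 * w) * Real.sin (2 * w * t) - v / (2 * w) := by
    intro t
    have hc := Real.sin_sq_add_cos_sq (2 * w * t)
    have : 2 * w * x₁ t + v = v * Real.cos (2 * w * t) + u * Real.sin (2 * w * t) := by
      linear_combination Real.cos (2 * w * t) * k1 t - Real.sin (2 * w * t) * k2 t
        - (2 * w * x₁ t + v) * hc
    field_simp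
    linear_combination this
  have f2 : ∀ t, x₂ t = -(u / (2 * w)) * Real.cos (2 * w * t)
        + v / (2 * w) * Real.sin (2 * w * t) + u / (2 * w) := by
    intro t
    have hc := Real.sin_sq_add_cos_sq (2 * w * t)
    have : 2 * w * x₂ t - u = -u * Real.cos (2 * w * t) + v * Real.sin (2 * w * t) := by
      linear_combination Real.sin (2 * w * t) * k1 t + Real.cos (2 * w * t) * k2 t
        - (2 * w * x₂ t - u) * hc
    field_simp
    linear_combination this
  intro t
  refine ⟨f1 t, f2 t, ?_⟩
  have := heis_const_aux (fun t => x₃ t - ((w + (u ^ 2 + v ^ 2) / (2 * w)) * t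
        - (u ^ 2 + v ^ 2) / (4 * w ^ 2) * Real.sin (2 * w * t))) (fun t => by
      refine ((d3 t).sub (((hasDerivAt_id t).const_mul _).sub
        ((dl t).sin.const_mul _))).congr_deriv ?_
      have h := hEL₁ t
      rw [e1, e2, f1, f2] at h
      have hc := Real.sin_sq_add_cos_sq (2 * w * t)
      have h' : deriv x₃ t = w + (u ^ 2 + v ^ 2) / (2 * w)
          - (u ^ 2 + v ^ 2) / (2 * w) * Real.cos (2 * w * t) := by
        generalize Real.sin (2 * w * t) = s at *
        generalize Real.cos (2 * w * t) = c at *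
        field_simp at h ⊢
        linear_combination h + (u ^ 2 + v ^ 2) * hc
      rw [h']
      field_simp
      ring) t
  simp [h0₃] at this
  linear_combination this
end

section
/- Let x = (x₁,x₂,x₃) : ℝ → ℝ³ be twice differentiable and satisfy the Christoffel form of the Heisenberg geodesic equations: x₁'' + 2x₂x₁'x₂' − 2x₁(x₂')² + 2x₂'x₃' = 0, x₂'' − 2x₂(x₁')² + 2x₁x₁'x₂' − 2x₁'x₃' = 0, x₃'' − 2x₁x₂(x₁')² + 2(x₁²−x₂²)x₁'x₂' + 2x₁x₂(x₂')² − 2x₁x₁'x₃' − 2x₂x₂'x₃' = 0 on ℝ. Then the natural lift y := (x₁', x₂', x₃') is parallel along x, i.e. D₁[x,y] = D₂[x,y] = D₃[x,y] ≡ 0, and consequently the pair (x, x') satisfies all six Euler–Lagrange equations of the Sasaki metric on TH₃. -/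
/-- First component of the covariant derivative of the field `y` along the curve `x`,
with respect to the Levi-Civita connection of the Heisenberg metric. -/
noncomputable def covD₁ (x₁ x₂ x₃ y₁ y₂ y₃ : ℝ → ℝ) : ℝ → ℝ := fun t =>
  deriv y₁ t + x₂ t * (y₁ t * deriv x₂ t + y₂ t * deriv x₁ t)
    - 2 * x₁ t * y₂ t * deriv x₂ t + y₂ t * deriv x₃ t + y₃ t * deriv x₂ t

/-- Second component of the covariant derivative of the field `y` along the curve `x`,
with respect to the Levi-Civita connection of the Heisenberg metric. -/
noncomputable def covD₂ (x₁ x₂ x₃ y₁ y₂ y₃ : ℝ → ℝ) : ℝ → ℝ := fun t =>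
  deriv y₂ t - 2 * x₂ t * y₁ t * deriv x₁ t
    + x₁ t * (y₁ t * deriv x₂ t + y₂ t * deriv x₁ t)
    - y₁ t * deriv x₃ t - y₃ t * deriv x₁ t

/-- Third component of the covariant derivative of the field `y` along the curve `x`,
with respect to the Levi-Civita connection of the Heisenberg metric. -/
noncomputable def covD₃ (x₁ x₂ x₃ y₁ y₂ y₃ : ℝ → ℝ) : ℝ → ℝ := fun t =>
  deriv y₃ t - 2 * x₁ t * x₂ t * y₁ t * deriv x₁ t
    + ((x₁ t) ^ 2 - (x₂ t) ^ 2) * (y₁ t * deriv x₂ t + y₂ t * deriv x₁ t)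
    - x₁ t * (y₁ t * deriv x₃ t + y₃ t * deriv x₁ t)
    + 2 * x₁ t * x₂ t * y₂ t * deriv x₂ t
    - x₂ t * (y₂ t * deriv x₃ t + y₃ t * deriv x₂ t)

/-- The quantity `s = x₃' + x₂x₁' − x₁x₂'` along a curve `x` in the Heisenberg manifold. -/
noncomputable def heisS (x₁ x₂ x₃ : ℝ → ℝ) : ℝ → ℝ := fun t =>
  deriv x₃ t + x₂ t * deriv x₁ t - x₁ t * deriv x₂ t

/-- The quantity `C = D₃[x,y] + x₂·D₁[x,y] − x₁·D₂[x,y]`. -/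
noncomputable def heisC (x₁ x₂ x₃ y₁ y₂ y₃ : ℝ → ℝ) : ℝ → ℝ := fun t =>
  covD₃ x₁ x₂ x₃ y₁ y₂ y₃ t + x₂ t * covD₁ x₁ x₂ x₃ y₁ y₂ y₃ t
    - x₁ t * covD₂ x₁ x₂ x₃ y₁ y₂ y₃ t

/-- The six Euler–Lagrange equations of the Sasaki metric on `TH₃`, in the induced
coordinates `(x¹,x²,x³,y¹,y²,y³)`. -/
def SasakiEL (x₁ x₂ x₃ y₁ y₂ y₃ : ℝ → ℝ) : Prop :=
  (∀ t : ℝ, deriv (fun t => deriv x₁ t + x₂ t * heisS x₁ x₂ x₃ t) t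
      = -(deriv x₂ t) * heisS x₁ x₂ x₃ t) ∧
  (∀ t : ℝ, deriv (fun t => deriv x₂ t - x₁ t * heisS x₁ x₂ x₃ t) t
      = deriv x₁ t * heisS x₁ x₂ x₃ t) ∧
  (∀ t : ℝ, deriv (heisS x₁ x₂ x₃) t = 0) ∧
  (∀ t : ℝ, deriv (fun t => covD₁ x₁ x₂ x₃ y₁ y₂ y₃ t
      + x₂ t * heisC x₁ x₂ x₃ y₁ y₂ y₃ t) t = 0) ∧
  (∀ t : ℝ, deriv (fun t => covD₂ x₁ x₂ x₃ y₁ y₂ y₃ t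
      - x₁ t * heisC x₁ x₂ x₃ y₁ y₂ y₃ t) t = 0) ∧
  (∀ t : ℝ, deriv (heisC x₁ x₂ x₃ y₁ y₂ y₃) t = 0)

/-- If the base curve `x` satisfies the Christoffel form of the Heisenberg geodesic
equations, then its natural lift `y = x'` is parallel along `x`, and the pair `(x, x')`
satisfies all six Euler–Lagrange equations of the Sasaki metric on `TH₃`. -/
theorem naturalLift_parallel_and_sasakiEL (x₁ x₂ x₃ : ℝ → ℝ)
    (hx₁ : Differentiable ℝ x₁) (hx₁' : Differentiable ℝ (deriv x₁))
    (hx₂ : Differentiable ℝ x₂) (hx₂' : Differentiable ℝ (deriv x₂))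
    (hx₃ : Differentiable ℝ x₃) (hx₃' : Differentiable ℝ (deriv x₃))
    (hgeo₁ : ∀ t : ℝ, deriv (deriv x₁) t + 2 * x₂ t * deriv x₁ t * deriv x₂ t
        - 2 * x₁ t * (deriv x₂ t) ^ 2 + 2 * deriv x₂ t * deriv x₃ t = 0)
    (hgeo₂ : ∀ t : ℝ, deriv (deriv x₂) t - 2 * x₂ t * (deriv x₁ t) ^ 2
        + 2 * x₁ t * deriv x₁ t * deriv x₂ t - 2 * deriv x₁ t * deriv x₃ t = 0)
    (hgeo₃ : ∀ t : ℝ, deriv (deriv x₃) t - 2 * x₁ t * x₂ t * (deriv x₁ t) ^ 2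
        + 2 * ((x₁ t) ^ 2 - (x₂ t) ^ 2) * deriv x₁ t * deriv x₂ t
        + 2 * x₁ t * x₂ t * (deriv x₂ t) ^ 2
        - 2 * x₁ t * deriv x₁ t * deriv x₃ t
        - 2 * x₂ t * deriv x₂ t * deriv x₃ t = 0) :
    (∀ t : ℝ, covD₁ x₁ x₂ x₃ (deriv x₁) (deriv x₂) (deriv x₃) t = 0 ∧
      covD₂ x₁ x₂ x₃ (deriv x₁) (deriv x₂) (deriv x₃) t = 0 ∧
      covD₃ x₁ x₂ x₃ (deriv x₁) (deriv x₂) (deriv x₃) t = 0) ∧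
    SasakiEL x₁ x₂ x₃ (deriv x₁) (deriv x₂) (deriv x₃) := by
  have h1 : ∀ t, covD₁ x₁ x₂ x₃ (deriv x₁) (deriv x₂) (deriv x₃) t = 0 := by
    intro t
    unfold covD₁
    linear_combination hgeo₁ t
  have h2 : ∀ t, covD₂ x₁ x₂ x₃ (deriv x₁) (deriv x₂) (deriv x₃) t = 0 := by
    intro t
    unfold covD₂
    linear_combination hgeo₂ t
  have h3 : ∀ t, covD₃ x₁ x₂ x₃ (deriv x₁) (deriv x₂) (deriv x₃) t = 0 := by
    intro t
    unfold covD₃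
    linear_combination hgeo₃ t
  have hC : ∀ t, heisC x₁ x₂ x₃ (deriv x₁) (deriv x₂) (deriv x₃) t = 0 := by
    intro t
    simp [heisC, h1, h2, h3]
  have hCf : heisC x₁ x₂ x₃ (deriv x₁) (deriv x₂) (deriv x₃) = fun _ => 0 := funext hC
  have hS : ∀ t, HasDerivAt (heisS x₁ x₂ x₃) 0 t := by
    intro t
    have h := (((hx₃' t).hasDerivAt.add ((hx₂ t).hasDerivAt.mul (hx₁' t).hasDerivAt)).sub
      ((hx₁ t).hasDerivAt.mul (hx₂' t).hasDerivAt))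
    refine HasDerivAt.congr_deriv (f := heisS x₁ x₂ x₃) h ?_
    linear_combination hgeo₃ t + x₂ t * hgeo₁ t - x₁ t * hgeo₂ t
  refine ⟨fun t => ⟨h1 t, h2 t, h3 t⟩, ?_, ?_, fun t => (hS t).deriv, ?_, ?_, ?_⟩
  · intro t
    have h := (hx₁' t).hasDerivAt.add ((hx₂ t).hasDerivAt.mul (hS t))
    refine (HasDerivAt.deriv h).trans ?_
    unfold heisS
    linear_combination hgeo₁ t
  · intro t
    have h := (hx₂' t).hasDerivAt.sub ((hx₁ t).hasDerivAt.mul (hS t))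
    refine (HasDerivAt.deriv h).trans ?_
    unfold heisS
    linear_combination hgeo₂ t
  · intro t
    simp [h1, hC]
  · intro t
    simp [h2, hC]
  · intro t
    simp [hCf]
end

section
/- Fix l, m, n ∈ ℝ. (a) The pair consisting of the constant curve x ≡ (0,0,0) and y(t) = (lt, mt, nt) satisfies all six Euler–Lagrange equations of the Sasaki metric on TH₃; it passes through the origin of TH₃ with velocity (0,0,0,l,m,n). (b) Conversely, if x ≡ (0,0,0) and y = (y₁,y₂,y₃) : ℝ → ℝ³ is twice differentiable and the pair (x,y) satisfies the six Euler–Lagrange equations, then y(t) = y(0) + t·y'(0) for all t ∈ ℝ. -/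
/-- A twice differentiable function with vanishing second derivative is affine. -/
theorem affine_of_deriv_deriv_zero (y : ℝ → ℝ) (h1 : Differentiable ℝ y)
    (h2 : Differentiable ℝ (deriv y)) (h : ∀ t, deriv (deriv y) t = 0) (t : ℝ) :
    y t = y 0 + t * deriv y 0 := by
  have hc : ∀ s, deriv y s = deriv y 0 := fun s => is_const_of_deriv_eq_zero h2 h s 0
  have hd : ∀ s, HasDerivAt (fun u => y u - u * deriv y 0) 0 s := by
    intro s
    have := (h1 s).hasDerivAt.fun_sub ((hasDerivAt_id' s).mul_const (deriv y 0))
    rw [hc s, one_mul, sub_self] at this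
    exact this
  have := is_const_of_deriv_eq_zero (fun s => (hd s).differentiableAt)
    (fun s => (hd s).deriv) t 0
  simp only [zero_mul, sub_zero] at this
  linarith

/-- Geodesics of `(TH₃, gˢ)` lying in the fibre over the origin:
(a) the pair `x ≡ (0,0,0)`, `y(t) = (lt, mt, nt)` satisfies all six Euler–Lagrange
equations of the Sasaki metric on `TH₃` and passes through the origin of `TH₃` with
velocity `(0,0,0,l,m,n)`;
(b) conversely, if `x ≡ (0,0,0)` and `(x,y)` satisfies the six equations with `y` twice
differentiable, then `y(t) = y(0) + t·y'(0)` for all `t`. -/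
theorem sasakiEL_fibre_geodesics (l m n : ℝ) :
    (SasakiEL (fun _ => 0) (fun _ => 0) (fun _ => 0)
        (fun t => l * t) (fun t => m * t) (fun t => n * t) ∧
      (fun _ : ℝ => (0 : ℝ)) 0 = 0 ∧ (fun _ : ℝ => (0 : ℝ)) 0 = 0 ∧
      (fun _ : ℝ => (0 : ℝ)) 0 = 0 ∧
      (fun t : ℝ => l * t) 0 = 0 ∧ (fun t : ℝ => m * t) 0 = 0 ∧
      (fun t : ℝ => n * t) 0 = 0 ∧
      deriv (fun _ : ℝ => (0 : ℝ)) 0 = 0 ∧ deriv (fun _ : ℝ => (0 : ℝ)) 0 = 0 ∧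
      deriv (fun _ : ℝ => (0 : ℝ)) 0 = 0 ∧
      deriv (fun t : ℝ => l * t) 0 = l ∧ deriv (fun t : ℝ => m * t) 0 = m ∧
      deriv (fun t : ℝ => n * t) 0 = n) ∧
    (∀ y₁ y₂ y₃ : ℝ → ℝ,
      Differentiable ℝ y₁ → Differentiable ℝ (deriv y₁) →
      Differentiable ℝ y₂ → Differentiable ℝ (deriv y₂) →
      Differentiable ℝ y₃ → Differentiable ℝ (deriv y₃) →
      SasakiEL (fun _ => 0) (fun _ => 0) (fun _ => 0) y₁ y₂ y₃ →
      ∀ t : ℝ, y₁ t = y₁ 0 + t * deriv y₁ 0 ∧ y₂ t = y₂ 0 + t * deriv y₂ 0 ∧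
        y₃ t = y₃ 0 + t * deriv y₃ 0) := by
  have key : ∀ y₁ y₂ y₃ : ℝ → ℝ,
      SasakiEL (fun _ => 0) (fun _ => 0) (fun _ => 0) y₁ y₂ y₃ ↔
      (∀ t, deriv (deriv y₁) t = 0) ∧ (∀ t, deriv (deriv y₂) t = 0) ∧
        (∀ t, deriv (deriv y₃) t = 0) := by
    intro y₁ y₂ y₃
    have hS : heisS (fun _ => 0) (fun _ => 0) (fun _ => 0) = fun _ => 0 := by
      funext t; simp [heisS]
    have h1 : covD₁ (fun _ => 0) (fun _ => 0) (fun _ => 0) y₁ y₂ y₃ = deriv y₁ := by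
      funext t; simp [covD₁]
    have h2 : covD₂ (fun _ => 0) (fun _ => 0) (fun _ => 0) y₁ y₂ y₃ = deriv y₂ := by
      funext t; simp [covD₂]
    have hC : heisC (fun _ => 0) (fun _ => 0) (fun _ => 0) y₁ y₂ y₃ = deriv y₃ := by
      funext t; simp [heisC, covD₃]
    simp [SasakiEL, hS, h1, h2, hC]
  have hl : ∀ a : ℝ, deriv (fun t : ℝ => a * t) = fun _ => a := by
    intro a; funext t
    simpa using ((hasDerivAt_id t).const_mul a).deriv
  refine ⟨⟨?_, ?_⟩, ?_⟩
  · rw [key]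
    simp only [hl]
    simp
  · simp only [hl]
    simp
  · intro y₁ y₂ y₃ a1 b1 a2 b2 a3 b3 h t
    obtain ⟨e1, e2, e3⟩ := (key _ _ _).1 h
    exact ⟨affine_of_deriv_deriv_zero y₁ a1 b1 e1 t, affine_of_deriv_deriv_zero y₂ a2 b2 e2 t,
      affine_of_deriv_deriv_zero y₃ a3 b3 e3 t⟩
end
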